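/- Let μ be a Borel probability measure on ℝ^d satisfying the family of logarithmic Sobolev inequalities LSI_ε: there exists a decreasing function β : (0,∞) → (0,∞) such that ∫ f² log(|f|/‖f‖_{2,μ}) dμ ≤ ε ∫ |∇f|² dμ + β(ε) ‖f‖²_{2,μ} for every ε > 0 and every f ∈ C¹_b(ℝ^d). Then for every f ∈ C¹_b(ℝ^d) with |∇f(x)| ≤ 1 for all x, every ε > 0 and all 0 < γ < σ, one has ∫_{ℝ^d} e^{σ f} dμ ≤ exp( (ε/2)σ² + σ( γ^{-1} log(∫_{ℝ^d} e^{γ f} dμ) − (ε/2)γ + 2β(ε)/γ ) − 2β(ε) ). -/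

import Mathlib

open MeasureTheory

/-- `f : ℝ^d → ℝ` is of class `C¹_b`: continuously differentiable, bounded, with
bounded gradient. -/
def C1b {d : ℕ} (f : EuclideanSpace ℝ (Fin d) → ℝ) : Prop :=
  ContDiff ℝ 1 f ∧ (∃ M, ∀ x, |f x| ≤ M) ∧ (∃ M, ∀ x, ‖gradient f x‖ ≤ M)

/-- The `L²(μ)` norm of a real-valued function. -/
noncomputable def L2Norm {d : ℕ} (μ : Measure (EuclideanSpace ℝ (Fin d)))
    (f : EuclideanSpace ℝ (Fin d) → ℝ) : ℝ :=
  (∫ x, |f x| ^ (2 : ℝ) ∂μ) ^ ((1 : ℝ) / 2)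

theorem aux_norm_grad {d : ℕ} (f : EuclideanSpace ℝ (Fin d) → ℝ) (x) :
    ‖gradient f x‖ = ‖fderiv ℝ f x‖ := by
  simp [gradient]

theorem aux_grad_exp {d : ℕ} (f : EuclideanSpace ℝ (Fin d) → ℝ) (hf : ContDiff ℝ 1 f)
    (h1 : ∀ x, ‖gradient f x‖ ≤ 1) (t : ℝ) (ht : 0 < t) (x) :
    ‖gradient (fun x => Real.exp (t / 2 * f x)) x‖ ≤ t / 2 * Real.exp (t / 2 * f x) := by
  rw [aux_norm_grad]
  have hd : HasFDerivAt f (fderiv ℝ f x) x := (hf.differentiable (by norm_num) x).hasFDerivAt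
  have h2 := (hd.const_mul (t / 2)).exp
  rw [h2.fderiv, norm_smul, norm_smul, ← aux_norm_grad, Real.norm_of_nonneg (Real.exp_pos _).le,
    Real.norm_of_nonneg (by positivity)]
  have := h1 x
  have h3 : 0 < Real.exp (t / 2 * f x) := Real.exp_pos _
  calc _ ≤ Real.exp (t / 2 * f x) * (t / 2 * 1) := by gcongr
    _ = _ := by ring

theorem aux_int {d : ℕ} (μ : Measure (EuclideanSpace ℝ (Fin d))) [IsProbabilityMeasure μ]
    (g : EuclideanSpace ℝ (Fin d) → ℝ) (hg : Continuous g) (M : ℝ) (hM : ∀ x, |g x| ≤ M) :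
    Integrable g μ :=
  Integrable.of_bound hg.aestronglyMeasurable M (Filter.Eventually.of_forall hM)

theorem aux_exp_le (s a M : ℝ) (h : |a| ≤ M) : |Real.exp (s * a)| ≤ Real.exp (|s| * M) := by
  rw [abs_of_pos (Real.exp_pos _), Real.exp_le_exp]
  calc s * a ≤ |s * a| := le_abs_self _
    _ = |s| * |a| := abs_mul _ _
    _ ≤ _ := by gcongr

theorem aux_key {d : ℕ} (μ : Measure (EuclideanSpace ℝ (Fin d))) [IsProbabilityMeasure μ]
    (f : EuclideanSpace ℝ (Fin d) → ℝ) (hf : C1b f) (h1 : ∀ x, ‖gradient f x‖ ≤ 1)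
    (ε b : ℝ) (hε : 0 < ε)
    (hLSI : ∀ f : EuclideanSpace ℝ (Fin d) → ℝ, C1b f →
      ∫ x, (f x) ^ 2 * Real.log (|f x| / L2Norm μ f) ∂μ
        ≤ ε * ∫ x, ‖gradient f x‖ ^ 2 ∂μ + b * (L2Norm μ f) ^ 2)
    (t : ℝ) (ht : 0 < t) (H : ℝ) (hH : H = ∫ x, Real.exp (t * f x) ∂μ) (hHpos : 0 < H) :
    t * (∫ x, f x * Real.exp (t * f x) ∂μ) - H * Real.log H ≤ (ε * t ^ 2 / 2 + 2 * b) * H := by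
  obtain ⟨hc, ⟨M, hM⟩, -⟩ := hf
  have hcont := hc.continuous
  have hge := aux_grad_exp f hc h1 t ht
  have hsq : ∀ x, Real.exp (t / 2 * f x) ^ 2 = Real.exp (t * f x) := fun x => by
    rw [← Real.exp_nat_mul]; congr 1; push_cast; ring
  have hC : C1b (fun x => Real.exp (t / 2 * f x)) := by
    refine ⟨by fun_prop, ⟨_, fun x => aux_exp_le _ _ M (hM x)⟩,
      ⟨t / 2 * Real.exp (|t / 2| * M), fun x => (hge x).trans ?_⟩⟩
    have := (le_abs_self _).trans (aux_exp_le (t / 2) _ M (hM x))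
    gcongr
  have hN : L2Norm μ (fun x => Real.exp (t / 2 * f x)) = H ^ ((1:ℝ) / 2) := by
    unfold L2Norm
    rw [hH]
    congr 1
    refine integral_congr_ae (Filter.Eventually.of_forall fun x => ?_)
    simp only [abs_of_pos (Real.exp_pos _), Real.rpow_two, hsq]
  have hi1 : Integrable (fun x => Real.exp (t * f x)) μ :=
    aux_int μ _ (by fun_prop) _ fun x => aux_exp_le t _ M (hM x)
  have hi2 : Integrable (fun x => f x * Real.exp (t * f x)) μ := by
    refine aux_int μ _ (by fun_prop) (M * Real.exp (|t| * M)) fun x => ?_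
    rw [abs_mul]
    have := aux_exp_le t _ M (hM x)
    have h2 := hM x
    have : 0 ≤ M := (abs_nonneg _).trans h2
    gcongr
  have h := hLSI _ hC
  rw [hN] at h
  have hN2 : (H ^ ((1:ℝ) / 2)) ^ 2 = H := by
    rw [← Real.sqrt_eq_rpow, Real.sq_sqrt hHpos.le]
  rw [hN2] at h
  have hL : ∫ x, Real.exp (t / 2 * f x) ^ 2 * Real.log (|Real.exp (t / 2 * f x)| / H ^ ((1:ℝ) / 2)) ∂μ
      = t / 2 * (∫ x, f x * Real.exp (t * f x) ∂μ) - 1 / 2 * Real.log H * H := by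
    rw [hH, ← integral_const_mul, ← integral_const_mul, ← integral_sub (hi2.const_mul _) (hi1.const_mul _), ← hH]
    refine integral_congr_ae (Filter.Eventually.of_forall fun x => ?_)
    simp only [hsq]
    rw [abs_of_pos (Real.exp_pos _), Real.log_div (Real.exp_pos _).ne' (by positivity),
      Real.log_exp, Real.log_rpow hHpos]
    ring
  have hR : ∫ x, ‖gradient (fun x => Real.exp (t / 2 * f x)) x‖ ^ 2 ∂μ ≤ t ^ 2 / 4 * H := by
    rw [hH, ← integral_const_mul]
    refine integral_mono_of_nonneg (Filter.Eventually.of_forall fun x => by positivity)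
      (hi1.const_mul _) (Filter.Eventually.of_forall fun x => ?_)
    simp only
    rw [← hsq]
    calc _ ≤ (t / 2 * Real.exp (t / 2 * f x)) ^ 2 := by gcongr; exact hge x
      _ = _ := by ring
  rw [hL] at h
  have := mul_le_mul_of_nonneg_left hR hε.le
  nlinarith

/-- if `μ` satisfies the family of logarithmic Sobolev inequalities LSI_ε
(with a decreasing defect function β), then for every `f ∈ C¹_b` with `|∇f| ≤ 1`,
every `ε > 0` and all `0 < γ < σ`,
`∫ e^{σf} dμ ≤ exp((ε/2)σ² + σ(γ⁻¹ log(∫ e^{γf} dμ) − (ε/2)γ + 2β(ε)/γ) − 2β(ε))`. -/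
theorem herbst_estimate_of_LSIeps
    {d : ℕ} (μ : Measure (EuclideanSpace ℝ (Fin d))) [IsProbabilityMeasure μ]
    (β : ℝ → ℝ) (hβpos : ∀ ε > (0 : ℝ), 0 < β ε)
    (hβdec : ∀ ε₁ ε₂ : ℝ, 0 < ε₁ → ε₁ ≤ ε₂ → β ε₂ ≤ β ε₁)
    (hLSI : ∀ ε > (0 : ℝ), ∀ f : EuclideanSpace ℝ (Fin d) → ℝ, C1b f →
      ∫ x, (f x) ^ 2 * Real.log (|f x| / L2Norm μ f) ∂μ
        ≤ ε * ∫ x, ‖gradient f x‖ ^ 2 ∂μ + β ε * (L2Norm μ f) ^ 2) :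
    ∀ f : EuclideanSpace ℝ (Fin d) → ℝ, C1b f → (∀ x, ‖gradient f x‖ ≤ 1) →
      ∀ ε > (0 : ℝ), ∀ γ σ : ℝ, 0 < γ → γ < σ →
        ∫ x, Real.exp (σ * f x) ∂μ
          ≤ Real.exp (ε / 2 * σ ^ 2
              + σ * (γ⁻¹ * Real.log (∫ x, Real.exp (γ * f x) ∂μ)
                      - ε / 2 * γ + 2 * β ε / γ)
              - 2 * β ε) := by
  intro f hf h1 ε hε γ σ hγ hγσ
  have hf' := hf
  obtain ⟨hc, ⟨M, hM⟩, -⟩ := hf'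
  have hcont := hc.continuous
  have hi : ∀ t, Integrable (fun x => Real.exp (t * f x)) μ := fun t =>
    aux_int μ _ (by fun_prop) _ fun x => aux_exp_le t _ M (hM x)
  have hset : ProbabilityTheory.integrableExpSet f μ = Set.univ := by
    ext t; simpa [ProbabilityTheory.integrableExpSet] using hi t
  set H : ℝ → ℝ := fun t => ∫ x, Real.exp (t * f x) ∂μ with hHdef
  have hpos : ∀ t, 0 < H t := fun t => integral_exp_pos (hi t)
  have hder : ∀ t, HasDerivAt H (∫ x, f x * Real.exp (t * f x) ∂μ) t := fun t =>
    ProbabilityTheory.hasDerivAt_mgf (X := f) (μ := μ) (by rw [hset]; simp)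
  set φ : ℝ → ℝ := fun t => Real.log (H t) / t - ε / 2 * t + 2 * β ε / t with hφ
  have hφd : ∀ t, 0 < t → HasDerivAt φ ((((∫ x, f x * Real.exp (t * f x) ∂μ) / H t) * t
      - Real.log (H t) * 1) / t ^ 2 - ε / 2 * 1 + (0 * t - 2 * β ε * 1) / t ^ 2) t := fun t ht =>
    ((((hder t).log (hpos t).ne').div (hasDerivAt_id t) ht.ne').sub
      ((hasDerivAt_id t).const_mul _)).add ((hasDerivAt_const t _).div (hasDerivAt_id t) ht.ne')
  have hanti : AntitoneOn φ (Set.Ioi 0) := by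
    refine antitoneOn_of_deriv_nonpos (convex_Ioi 0)
      (fun t ht => (hφd t ht).continuousAt.continuousWithinAt)
      (fun t ht => (hφd t (by simpa using ht)).differentiableAt.differentiableWithinAt) ?_
    intro t ht
    have ht : 0 < t := by simpa using ht
    rw [(hφd t ht).deriv]
    have hk := aux_key μ f hf h1 ε (β ε) hε (hLSI ε hε) t ht (H t) rfl (hpos t)
    set D := ∫ x, f x * Real.exp (t * f x) ∂μ
    have hp := hpos t
    have : (D / H t * t - Real.log (H t) * 1) / t ^ 2 - ε / 2 * 1 + (0 * t - 2 * β ε * 1) / t ^ 2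
      = ((t * D - H t * Real.log (H t)) - (ε * t ^ 2 / 2 + 2 * β ε) * H t) / (H t * t ^ 2) := by
      field_simp
      ring
    rw [this]
    exact div_nonpos_of_nonpos_of_nonneg (by linarith) (by positivity)
  have hσ : 0 < σ := hγ.trans hγσ
  have hfin := hanti (Set.mem_Ioi.2 hγ) (Set.mem_Ioi.2 hσ) hγσ.le
  simp only [hφ] at hfin
  change H σ ≤ Real.exp (ε / 2 * σ ^ 2 + σ * (γ⁻¹ * Real.log (H γ) - ε / 2 * γ + 2 * β ε / γ)
    - 2 * β ε)
  rw [← Real.log_le_iff_le_exp (hpos σ)]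
  have h2 := mul_le_mul_of_nonneg_left hfin hσ.le
  have e1 : σ * (Real.log (H σ) / σ - ε / 2 * σ + 2 * β ε / σ)
      = Real.log (H σ) - ε / 2 * σ ^ 2 + 2 * β ε := by field_simp
  rw [e1, div_eq_inv_mul (Real.log (H γ))] at h2
  linarith
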